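/- arXiv:1508.01396 — 2 statements merged into one kernel-verified Lean document; each statement's English description precedes it below -/
import Mathlib

section
/- If a graph G admits a Kempe-coloring of size k with k ≤ 6, then G has a clique minor of size k (i.e., k pairwise disjoint, pairwise adjacent, connected nonempty vertex subsets). -/
open SimpleGraph

/-- `A` is an anticlique (independent set) of `G`. -/
def IsAnticlique {V : Type*} (G : SimpleGraph V) (A : Finset V) : Prop :=
  ∀ x ∈ A, ∀ y ∈ A, ¬ G.Adj x y

/-- A coloring of `G`: a partition of the vertex set into nonempty anticliques. -/
def IsColoring {V : Type*} (G : SimpleGraph V) (c : Finset (Finset V)) : Prop :=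
  (∀ A ∈ c, A.Nonempty) ∧
  (∀ A ∈ c, ∀ B ∈ c, A ≠ B → Disjoint A B) ∧
  (∀ v : V, ∃ A ∈ c, v ∈ A) ∧
  (∀ A ∈ c, IsAnticlique G A)

/-- `A` induces a connected subgraph of `G`. -/
def ConnSet {V : Type*} (G : SimpleGraph V) (A : Finset V) : Prop :=
  (G.induce (↑A : Set V)).Connected

/-- A Kempe-coloring: any two distinct classes induce a connected subgraph. -/
def IsKempe {V : Type*} [DecidableEq V] (G : SimpleGraph V) (c : Finset (Finset V)) : Prop :=
  IsColoring G c ∧ ∀ A ∈ c, ∀ B ∈ c, A ≠ B → ConnSet G (A ∪ B)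

/-- Two vertex sets are adjacent if some edge joins them. -/
def SetsAdj {V : Type*} (G : SimpleGraph V) (A B : Finset V) : Prop :=
  ∃ a ∈ A, ∃ b ∈ B, G.Adj a b

/-- A clique minor: pairwise disjoint, pairwise adjacent, nonempty connected subsets. -/
def IsCliqueMinor {V : Type*} (G : SimpleGraph V) (K : Finset (Finset V)) : Prop :=
  (∀ A ∈ K, A.Nonempty) ∧ (∀ A ∈ K, ConnSet G A) ∧
  (∀ A ∈ K, ∀ B ∈ K, A ≠ B → Disjoint A B ∧ SetsAdj G A B)

/-- A shallow clique minor: a clique minor all of whose branch sets have size 1 or 2. -/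
def IsShallowCliqueMinor {V : Type*} (G : SimpleGraph V) (K : Finset (Finset V)) : Prop :=
  IsCliqueMinor G K ∧ ∀ A ∈ K, A.card ≤ 2

/-- `T` is a transversal of the family `K`: it meets each member in exactly one vertex. -/
def Traversed {V : Type*} [DecidableEq V] (T : Finset V) (K : Finset (Finset V)) : Prop :=
  ∀ A ∈ K, (T ∩ A).card = 1

/-- `c` is a coloring of `G` of minimum size, i.e. of size `χ(G)`. -/
def MinColoring {V : Type*} (G : SimpleGraph V) (c : Finset (Finset V)) : Prop :=
  IsColoring G c ∧ ∀ d, IsColoring G d → c.card ≤ d.card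

/-- `G` has no antitriangle (independent set of size 3). -/
def HasNoAntitriangle {V : Type*} (G : SimpleGraph V) : Prop :=
  ¬ ∃ A : Finset V, A.card = 3 ∧ IsAnticlique G A

/-!
In a Kempe coloring with classes `A₁, …, A_k` of a graph with `n` vertices, `Aᵢ ∪ Aⱼ` is connected
and so spans at least `|Aᵢ| + |Aⱼ| - 1` edges. Summing over all pairs gives at least
`(k - 1) n - k.choose 2 = k.choose 2 + (k - 1) (n - k)` edges, and for `k ≤ 6` so many edges force a
`K_k` minor.

The last claim is proved as in Mader's theorem, by induction on `k` with `k.choose 2 + α (n - k)`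
edges for a slope `α ≤ k - 1`. Delete edges until equality holds. Deleting an isolated vertex, or
contracting an edge that lies in fewer than `α` triangles, preserves the bound. If neither is
possible, some vertex has degree less than `2 α`, and its neighborhood is a graph with fewer than
`2 α` vertices, all of degree at least `α`. This is dense enough for a `K_{k-1}` minor, which the
vertex itself extends to a `K_k` minor. The slopes that this yields for `k = 2, …, 6` are
`1, 2, 2, 3, 5`.
-/

open Function

/-- A model of `H` as a minor of `G`: disjoint connected branch sets, one for each vertex of `H`,
such that adjacent vertices of `H` have adjacent branch sets. -/
structure MinorModel {W V : Type*} (H : SimpleGraph W) (G : SimpleGraph V) where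
  branch : W → Finset V
  connSet : ∀ w, ConnSet G (branch w)
  disjoint : Pairwise (Disjoint on branch)
  setsAdj : ∀ ⦃u w⦄, H.Adj u w → SetsAdj G (branch u) (branch w)

/-- `G` has a clique minor with exactly `t` branch sets. -/
def HasCliqueMinor {V : Type*} (G : SimpleGraph V) (t : ℕ) : Prop :=
  ∃ K : Finset (Finset V), IsCliqueMinor G K ∧ K.card = t

section Minors

variable {V W : Type*} {G : SimpleGraph V} {H : SimpleGraph W}

theorem ConnSet.nonempty {A : Finset V} (hA : ConnSet G A) : A.Nonempty :=
  Finset.coe_nonempty.1 (Set.nonempty_coe_sort.1 (Connected.nonempty hA))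

theorem connSet_singleton (v : V) : ConnSet G {v} := by
  have : Subsingleton ((({v} : Finset V) : Set V) : Type _) := by simp
  have : Nonempty ((({v} : Finset V) : Set V) : Type _) := by simp
  exact Connected.of_subsingleton

theorem connSet_pair [DecidableEq V] {x y : V} (hxy : G.Adj x y) : ConnSet G {x, y} := by
  rw [ConnSet, Finset.coe_pair]
  exact induce_pair_connected_of_adj hxy

theorem SetsAdj.symm {A B : Finset V} (h : SetsAdj G A B) : SetsAdj G B A := by
  obtain ⟨a, ha, b, hb, hab⟩ := h
  exact ⟨b, hb, a, ha, hab.symm⟩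

theorem SetsAdj.mono {A B A' B' : Finset V} (h : SetsAdj G A B) (hA : A ⊆ A') (hB : B ⊆ B') :
    SetsAdj G A' B' := by
  obtain ⟨a, ha, b, hb, hab⟩ := h
  exact ⟨a, hA ha, b, hB hb, hab⟩

theorem ConnSet.reachable_induce_of_subset {A B : Finset V} (hA : ConnSet G A) (hAB : A ⊆ B)
    {a b : (B : Set V)} (ha : (a : V) ∈ A) (hb : (b : V) ∈ A) :
    (G.induce (B : Set V)).Reachable a b :=
  (hA.preconnected ⟨a, ha⟩ ⟨b, hb⟩).map (induceHomOfLE G (Finset.coe_subset.2 hAB)).toHom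

namespace MinorModel

theorem connSet_biUnion [DecidableEq V] (M : MinorModel H G) {A : Finset W} (hA : ConnSet H A) :
    ConnSet G (A.biUnion M.branch) := by
  have reachable_of_reachable : ∀ u w : (A : Set W), (H.induce (A : Set W)).Reachable u w →
      ∀ a b : (A.biUnion M.branch : Set V), (a : V) ∈ M.branch u → (b : V) ∈ M.branch w →
        (G.induce (A.biUnion M.branch : Set V)).Reachable a b := by
    rintro u w ⟨p⟩
    induction p with
    | nil =>
      intro a b ha hb
      exact (M.connSet _).reachable_induce_of_subset
        (Finset.subset_biUnion_of_mem _ (by simp)) ha hb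
    | @cons u u' w huu' _ ih =>
      intro a b ha hb
      obtain ⟨x, hx, y, hy, hxy⟩ := M.setsAdj huu'
      have hxA : x ∈ A.biUnion M.branch := Finset.mem_biUnion.2 ⟨u, u.2, hx⟩
      have hyA : y ∈ A.biUnion M.branch := Finset.mem_biUnion.2 ⟨u', u'.2, hy⟩
      have hax := (M.connSet u).reachable_induce_of_subset
        (Finset.subset_biUnion_of_mem M.branch u.2) (a := a) (b := ⟨x, hxA⟩) ha hx
      have hxy' : (G.induce (A.biUnion M.branch : Set V)).Adj ⟨x, hxA⟩ ⟨y, hyA⟩ := hxy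
      exact (hax.trans hxy'.reachable).trans (ih ⟨y, hyA⟩ b hy hb)
  obtain ⟨w, hw⟩ := hA.nonempty
  obtain ⟨v, hv⟩ := (M.connSet w).nonempty
  have : Nonempty (A.biUnion M.branch : Set V) := ⟨v, Finset.mem_biUnion.2 ⟨w, hw, hv⟩⟩
  refine ⟨fun a b ↦ ?_⟩
  obtain ⟨u, hu, ha⟩ := Finset.mem_biUnion.1 a.2
  obtain ⟨w, hw, hb⟩ := Finset.mem_biUnion.1 b.2
  exact reachable_of_reachable ⟨u, hu⟩ ⟨w, hw⟩ (hA.preconnected _ _) a b ha hb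

theorem disjoint_biUnion [DecidableEq V] (M : MinorModel H G) {A A' : Finset W}
    (h : Disjoint A A') : Disjoint (A.biUnion M.branch) (A'.biUnion M.branch) := by
  simp only [Finset.disjoint_biUnion_left, Finset.disjoint_biUnion_right]
  exact fun w hw u hu ↦ M.disjoint (Finset.disjoint_iff_ne.1 h u hu w hw)

theorem setsAdj_biUnion [DecidableEq V] (M : MinorModel H G) {A A' : Finset W}
    (h : SetsAdj H A A') : SetsAdj G (A.biUnion M.branch) (A'.biUnion M.branch) := by
  obtain ⟨u, hu, w, hw, huw⟩ := h
  exact (M.setsAdj huw).mono (Finset.subset_biUnion_of_mem _ hu) (Finset.subset_biUnion_of_mem _ hw)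

theorem isCliqueMinor_image [DecidableEq V] (M : MinorModel H G) {K : Finset (Finset W)}
    (hK : IsCliqueMinor H K) : IsCliqueMinor G (K.image (·.biUnion M.branch)) := by
  obtain ⟨-, hconn, hpair⟩ := hK
  have connSet_of_mem : ∀ A ∈ K, ConnSet G (A.biUnion M.branch) :=
    fun A hA ↦ M.connSet_biUnion (hconn A hA)
  simp only [IsCliqueMinor, Finset.forall_mem_image]
  refine ⟨fun A hA ↦ (connSet_of_mem A hA).nonempty, connSet_of_mem, fun A hA A' hA' hne ↦ ?_⟩
  obtain ⟨hdisj, hadj⟩ := hpair A hA A' hA' (ne_of_apply_ne (·.biUnion M.branch) hne)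
  exact ⟨M.disjoint_biUnion hdisj, M.setsAdj_biUnion hadj⟩

theorem card_image [DecidableEq V] (M : MinorModel H G) {K : Finset (Finset W)}
    (hK : IsCliqueMinor H K) : (K.image (·.biUnion M.branch)).card = K.card := by
  obtain ⟨-, hconn, hpair⟩ := hK
  refine Finset.card_image_of_injOn fun A hA A' hA' (heq : A.biUnion _ = A'.biUnion _) ↦ ?_
  by_contra hne
  have hdisj := M.disjoint_biUnion (hpair A hA A' hA' hne).1
  rw [← heq, disjoint_self] at hdisj
  exact (M.connSet_biUnion (hconn A hA)).nonempty.ne_empty hdisj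

/-- A copy of `H` in `G`, as a minor model with singleton branch sets. -/
def ofCopy (f : Copy H G) : MinorModel H G where
  branch w := {f w}
  connSet w := connSet_singleton (f w)
  disjoint _ _ hne := Finset.disjoint_singleton.2 (f.injective.ne hne)
  setsAdj u w huw := ⟨f u, by simp, f w, by simp, f.toHom.map_adj huw⟩

end MinorModel

theorem HasCliqueMinor.of_minorModel {t : ℕ} (M : MinorModel H G) (h : HasCliqueMinor H t) :
    HasCliqueMinor G t := by
  classical
  obtain ⟨K, hK, rfl⟩ := h
  exact ⟨_, M.isCliqueMinor_image hK, M.card_image hK⟩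

theorem HasCliqueMinor.of_isContained {t : ℕ} (hHG : H ⊑ G) (h : HasCliqueMinor H t) :
    HasCliqueMinor G t :=
  h.of_minorModel (MinorModel.ofCopy hHG.some)

theorem hasCliqueMinor_zero : HasCliqueMinor G 0 :=
  ⟨∅, by simp [IsCliqueMinor], rfl⟩

theorem IsCliqueMinor.insert [DecidableEq V] {K : Finset (Finset V)} (hK : IsCliqueMinor G K)
    {A : Finset V} (hA : ConnSet G A) (hAK : ∀ B ∈ K, Disjoint A B ∧ SetsAdj G A B) :
    IsCliqueMinor G (insert A K) := by
  obtain ⟨hne, hconn, hpair⟩ := hK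
  simp only [IsCliqueMinor, Finset.forall_mem_insert]
  exact ⟨⟨hA.nonempty, hne⟩, ⟨hA, hconn⟩, ⟨fun h ↦ absurd rfl h, fun B hB _ ↦ hAK B hB⟩,
    fun B hB ↦ ⟨fun _ ↦ ⟨(hAK B hB).1.symm, (hAK B hB).2.symm⟩, hpair B hB⟩⟩

theorem HasCliqueMinor.succ_of_induce_neighborSet {t : ℕ} {v : V}
    (h : HasCliqueMinor (G.induce (G.neighborSet v)) t) : HasCliqueMinor G (t + 1) := by
  classical
  obtain ⟨K, hK, rfl⟩ := h
  let M := MinorModel.ofCopy (Copy.induce G (G.neighborSet v))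
  have adj_of_mem : ∀ B ∈ K.image (·.biUnion M.branch), ∀ w ∈ B, G.Adj v w := by
    simp only [Finset.forall_mem_image, Finset.mem_biUnion]
    rintro B - w ⟨u, -, hu⟩
    rw [Finset.mem_singleton.1 hu]
    exact u.2
  have hinsert : IsCliqueMinor G (insert {v} (K.image (·.biUnion M.branch))) := by
    refine (M.isCliqueMinor_image hK).insert (connSet_singleton v) fun B hB ↦ ?_
    obtain ⟨w, hw⟩ := (M.isCliqueMinor_image hK).1 B hB
    exact ⟨Finset.disjoint_singleton_left.2 fun hv ↦ (adj_of_mem B hB v hv).ne rfl,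
      v, Finset.mem_singleton_self v, w, hw, adj_of_mem B hB w hw⟩
  have hnotMem : {v} ∉ K.image (·.biUnion M.branch) := fun hv ↦
    (adj_of_mem _ hv v (Finset.mem_singleton_self v)).ne rfl
  exact ⟨_, hinsert, by rw [Finset.card_insert_of_notMem hnotMem, M.card_image hK]⟩

theorem hasCliqueMinor_top [Finite V] : HasCliqueMinor (⊤ : SimpleGraph V) (Nat.card V) := by
  classical
  have := Fintype.ofFinite V
  refine ⟨Finset.univ.image singleton, ?_, ?_⟩
  · simpa [IsCliqueMinor, connSet_singleton, SetsAdj] using fun a b h ↦ ⟨Ne.symm h, h⟩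
  · rw [Finset.card_image_of_injective _ Finset.singleton_injective, Finset.card_univ,
      Nat.card_eq_fintype_card]

end Minors

section EdgeCounts

variable {V : Type*} {G : SimpleGraph V}

theorem exists_le_ncard_edgeSet_eq {m : ℕ} (hm : m ≤ G.edgeSet.ncard) :
    ∃ H ≤ G, H.edgeSet.ncard = m := by
  obtain ⟨s, hsG, hs⟩ := Set.exists_subset_card_eq hm
  refine ⟨fromEdgeSet s, ?_, ?_⟩
  · rw [← G.fromEdgeSet_edgeSet]
    exact fromEdgeSet_mono hsG
  · rw [edgeSet_fromEdgeSet, sdiff_eq_left.2, hs]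
    exact Set.disjoint_left.2 fun e he ↦ G.not_isDiag_of_mem_edgeSet (hsG he)

variable [Finite V]

theorem mul_natCard_le_two_mul_ncard_edgeSet {d : ℕ} (hd : ∀ v, d ≤ (G.neighborSet v).ncard) :
    d * Nat.card V ≤ 2 * G.edgeSet.ncard := by
  classical
  have := Fintype.ofFinite V
  calc d * Nat.card V = ∑ _v : V, d := by simp [mul_comm]
    _ ≤ ∑ v, G.degree v := Finset.sum_le_sum fun v _ ↦
      (hd v).trans_eq (Set.ncard_eq_toFinset_card' _)
    _ = 2 * G.edgeSet.ncard := by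
      rw [sum_degrees_eq_twice_card_edges, ← coe_edgeFinset, Set.ncard_coe_finset]

theorem ncard_edgeSet_top : (⊤ : SimpleGraph V).edgeSet.ncard = (Nat.card V).choose 2 := by
  classical
  have := Fintype.ofFinite V
  rw [← coe_edgeFinset, Set.ncard_coe_finset, card_edgeFinset_top_eq_card_choose_two,
    Nat.card_eq_fintype_card]

theorem eq_top_of_choose_two_le_ncard_edgeSet (h : (Nat.card V).choose 2 ≤ G.edgeSet.ncard) :
    G = ⊤ := by
  rw [← ncard_edgeSet_top] at h
  exact edgeSet_injective (Set.eq_of_subset_of_ncard_le (edgeSet_mono le_top) h)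

theorem natCard_compl_singleton_add_one (v : V) : Nat.card ({v}ᶜ : Set V) + 1 = Nat.card V := by
  rw [Nat.card_coe_set_eq, ← Set.ncard_add_ncard_compl {v}, Set.ncard_singleton, add_comm]

theorem ncard_edgeSet_induce_compl_singleton {v : V} (hv : G.IsIsolated v) :
    (G.induce {v}ᶜ).edgeSet.ncard = G.edgeSet.ncard := by
  classical
  have := Fintype.ofFinite V
  have hsupport : G.support ⊆ {v}ᶜ :=
    Set.subset_compl_singleton_iff.2 ((notMem_support_iff_isIsolated G).2 hv)
  simp only [← coe_edgeFinset, Set.ncard_coe_finset]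
  exact card_edgeFinset_induce_of_support_subset hsupport

end EdgeCounts

/-- The graph obtained from `G` by identifying `y` with `x`; for adjacent `x` and `y`, the
contraction of the edge `xy`. The merged vertex keeps the name `x`, and loops and parallel edges
disappear. -/
def contract {V : Type*} [DecidableEq V] (G : SimpleGraph V) (x y : V) :
    SimpleGraph ({y}ᶜ : Set V) :=
  (G.map (update id y x)).induce {y}ᶜ

section Contraction

variable {V : Type*} [DecidableEq V] {G : SimpleGraph V} {x y : V}

/-- An edge contraction as a minor: the branch set of the merged vertex is the contracted edge. -/
def MinorModel.ofContract (hxy : G.Adj x y) : MinorModel (contract G x y) G where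
  branch w := if (w : V) = x then {x, y} else {(w : V)}
  connSet w := by
    split_ifs
    · exact connSet_pair hxy
    · exact connSet_singleton _
  disjoint := by
    rintro ⟨u, hu⟩ ⟨w, hw⟩ huw
    simp only [onFun, Finset.disjoint_left]
    grind
  setsAdj := by
    rintro ⟨u, hu⟩ ⟨w, hw⟩ ⟨-, u', w', hadj, hu', hw'⟩
    simp only [update_apply, id, Embedding.subtype_apply] at hu' hw'
    exact ⟨u', by grind, w', by grind, hadj⟩

theorem isIsolated_map_update (hxy : x ≠ y) : (G.map (update id y x)).IsIsolated y := by
  rintro w ⟨-, u', -, -, hu', -⟩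
  grind [update_apply]

theorem injOn_sym2Map_update :
    Set.InjOn (Sym2.map (update id y x))
      (G.edgeSet \ (s(y, ·)) '' insert x (G.commonNeighbors x y)) := by
  rintro ⟨a, b⟩ ⟨hab, hab'⟩ ⟨c, d⟩ ⟨hcd, hcd'⟩ h
  -- For an edge `yw` of this set `x` and `w` are not adjacent, so no edge already sits at `xw`.
  have hba := hab.symm
  have hdc := hcd.symm
  simp only [Set.mem_image, Set.mem_insert_iff, mem_commonNeighbors, Sym2.eq_iff, mem_edgeSet,
    Sym2.map_mk, update_apply, id] at *
  grind [Adj.ne]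

theorem ncard_edgeSet_le_contract [Finite V] (hxy : G.Adj x y) :
    G.edgeSet.ncard ≤
      (contract G x y).edgeSet.ncard + (G.commonNeighbors x y).ncard + 1 := by
  set D : Set (Sym2 V) := (s(y, ·)) '' insert x (G.commonNeighbors x y)
  have hD : D.ncard ≤ (G.commonNeighbors x y).ncard + 1 :=
    (Set.ncard_image_le).trans (Set.ncard_insert_le _ _)
  have hmaps : ∀ e ∈ G.edgeSet \ D, e.map (update id y x) ∈ (G.map (update id y x)).edgeSet := by
    rintro ⟨a, b⟩ ⟨hab, habD⟩
    refine ⟨fun h : update id y x a = update id y x b ↦ habD ?_, a, b, hab, rfl, rfl⟩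
    have heq : s(y, x) = s(a, b) := by
      simp only [update_apply, id] at h
      grind [hab.ne]
    exact ⟨x, Set.mem_insert _ _, heq⟩
  rw [contract, ncard_edgeSet_induce_compl_singleton (isIsolated_map_update hxy.ne)]
  calc G.edgeSet.ncard ≤ (G.edgeSet \ D).ncard + D.ncard := Set.ncard_le_ncard_sdiff_add_ncard _ _
    _ ≤ (G.map (update id y x)).edgeSet.ncard + ((G.commonNeighbors x y).ncard + 1) :=
      add_le_add (Set.ncard_le_ncard_of_injOn _ hmaps injOn_sym2Map_update) hD

end Contraction

section Neighborhoods

variable {V : Type*} {G : SimpleGraph V}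

theorem ncard_neighborSet_induce_neighborSet {v : V} (w : G.neighborSet v) :
    ((G.induce (G.neighborSet v)).neighborSet w).ncard = (G.commonNeighbors v w).ncard := by
  rw [← Set.ncard_image_of_injective _ Subtype.val_injective]
  congr 1
  ext u
  simp [mem_commonNeighbors, and_comm]

variable [Finite V]

theorem exists_ncard_neighborSet_lt_two_mul {d : ℕ} (h : G.edgeSet.ncard < d * Nat.card V) :
    ∃ v, (G.neighborSet v).ncard < 2 * d := by
  by_contra! hd
  have := mul_natCard_le_two_mul_ncard_edgeSet hd
  rw [mul_assoc] at this
  lia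

theorem ncard_commonNeighbors_lt {v w : V} (hvw : G.Adj v w) :
    (G.commonNeighbors v w).ncard < (G.neighborSet v).ncard :=
  Set.ncard_lt_ncard ((Set.ssubset_iff_of_subset Set.inter_subset_left).2
    ⟨w, hvw, G.notMem_commonNeighbors_right v w⟩)

end Neighborhoods

theorem two_mul_choose_two (n : ℕ) : 2 * n.choose 2 = n * (n - 1) := by
  rw [Nat.choose_two_right, Nat.two_mul_div_two_of_even (Nat.even_mul_pred_self n)]

universe u

/-- The extremal statement, with slope `α`, for `K_t` minors in graphs over the universe `u`:
every graph with `t + r` vertices and at least `t.choose 2 + α * r` edges has a `K_t` minor. -/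
def ForcesCliqueMinor (α t : ℕ) : Prop :=
  ∀ (r : ℕ) (V : Type u) [Finite V] (G : SimpleGraph V), Nat.card V = t + r →
    t.choose 2 + α * r ≤ G.edgeSet.ncard → HasCliqueMinor G t

theorem ForcesCliqueMinor.mono {α β t : ℕ} (h : ForcesCliqueMinor.{u} α t) (hαβ : α ≤ β) :
    ForcesCliqueMinor.{u} β t :=
  fun r V _ G hV hG ↦ h r V G hV (le_trans (by gcongr) hG)

theorem forcesCliqueMinor_one : ForcesCliqueMinor.{u} 0 1 := by
  intro r V _ G hV _
  obtain ⟨v⟩ : Nonempty V := (Nat.card_pos_iff.1 (by lia)).1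
  exact HasCliqueMinor.succ_of_induce_neighborSet (v := v) hasCliqueMinor_zero

theorem forcesCliqueMinor_of_irreducible {α t : ℕ} (hlt : t.choose 2 < α * t)
    (hirred : ∀ (V : Type u) [Finite V] (G : SimpleGraph V), (∀ v, ¬ G.IsIsolated v) →
      (∀ x y, G.Adj x y → α ≤ (G.commonNeighbors x y).ncard) →
      G.edgeSet.ncard < α * Nat.card V → HasCliqueMinor G t) :
    ForcesCliqueMinor.{u} α t := by
  classical
  intro r
  induction r with
  | zero =>
    intro V _ G hV hG
    rw [eq_top_of_choose_two_le_ncard_edgeSet (G := G) (by simpa [hV] using hG), ← add_zero t, ← hV]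
    exact hasCliqueMinor_top
  | succ r ih =>
    intro V _ G hV hG
    obtain ⟨H, hHG, hH⟩ := exists_le_ncard_edgeSet_eq hG
    refine .of_isContained (.of_le hHG) ?_
    rw [mul_add_one] at hH
    have natCard_compl : ∀ v : V, Nat.card ({v}ᶜ : Set V) = t + r := fun v ↦ by
      have := natCard_compl_singleton_add_one v
      lia
    by_cases! hiso : ∃ v, H.IsIsolated v
    · obtain ⟨v, hv⟩ := hiso
      refine .of_isContained ⟨Copy.induce H {v}ᶜ⟩ (ih _ _ (natCard_compl v) ?_)
      rw [ncard_edgeSet_induce_compl_singleton hv]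
      lia
    by_cases! hfew : ∃ x y, H.Adj x y ∧ (H.commonNeighbors x y).ncard < α
    · obtain ⟨x, y, hxy, hcommon⟩ := hfew
      refine .of_minorModel (.ofContract hxy) (ih _ _ (natCard_compl y) ?_)
      have := ncard_edgeSet_le_contract hxy
      lia
    · refine hirred V H hiso hfew ?_
      rw [hH, hV, mul_add, mul_add_one]
      lia

theorem ForcesCliqueMinor.succ {α β t : ℕ} (h : ForcesCliqueMinor.{u} α t) (ht : t ≤ β + 1)
    (htβ : t < 2 * β)
    (hdense : ∀ r, β < t + r → t + r < 2 * β → 2 * (t.choose 2 + α * r) ≤ β * (t + r) + 1) :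
    ForcesCliqueMinor.{u} β (t + 1) := by
  refine forcesCliqueMinor_of_irreducible ?_ fun V _ G hiso htri hedges ↦ ?_
  · have hchoose := two_mul_choose_two (t + 1)
    rw [Nat.add_sub_cancel] at hchoose
    nlinarith
  obtain ⟨v, hv⟩ := exists_ncard_neighborSet_lt_two_mul hedges
  obtain ⟨w, hvw⟩ := exists_adj_iff_not_isIsolated.2 (hiso v)
  have hβ : β < Nat.card (G.neighborSet v) := (htri v w hvw).trans_lt (ncard_commonNeighbors_lt hvw)
  have hminDegree := mul_natCard_le_two_mul_ncard_edgeSet (G := G.induce (G.neighborSet v))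
    fun w ↦ (htri v w w.2).trans_eq (ncard_neighborSet_induce_neighborSet w).symm
  obtain ⟨r, hr⟩ : ∃ r, Nat.card (G.neighborSet v) = t + r := Nat.exists_eq_add_of_le (by lia)
  refine HasCliqueMinor.succ_of_induce_neighborSet (v := v) (h r _ _ hr ?_)
  rw [← Nat.card_coe_set_eq, hr] at hv
  rw [hr] at hβ hminDegree
  have := hdense r hβ hv
  lia

theorem forcesCliqueMinor_two : ForcesCliqueMinor.{u} 1 2 :=
  forcesCliqueMinor_one.succ (by decide) (by decide) (by lia)

theorem forcesCliqueMinor_three : ForcesCliqueMinor.{u} 2 3 :=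
  forcesCliqueMinor_two.succ (by decide) (by decide) (by grind [Nat.choose])

theorem forcesCliqueMinor_four : ForcesCliqueMinor.{u} 2 4 :=
  forcesCliqueMinor_three.succ (by decide) (by decide) (by grind [Nat.choose])

theorem forcesCliqueMinor_five : ForcesCliqueMinor.{u} 3 5 :=
  forcesCliqueMinor_four.succ (by decide) (by decide) (by grind [Nat.choose])

theorem forcesCliqueMinor_six : ForcesCliqueMinor.{u} 5 6 :=
  forcesCliqueMinor_five.succ (by decide) (by decide) (by grind [Nat.choose])

theorem forcesCliqueMinor_of_le_six {k : ℕ} (hk : k ≤ 6) : ForcesCliqueMinor.{u} (k - 1) k := by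
  interval_cases k
  · exact fun _ _ _ _ _ _ ↦ hasCliqueMinor_zero
  · exact forcesCliqueMinor_one
  · exact forcesCliqueMinor_two
  · exact forcesCliqueMinor_three
  · exact forcesCliqueMinor_four.mono (by decide)
  · exact forcesCliqueMinor_five.mono (by decide)
  · exact forcesCliqueMinor_six

theorem sum_offDiag_add_two_mul_sum {ι : Type*} (s : Finset ι) (f : ι → ℕ) :
    ∑ p ∈ s.offDiag, (f p.1 + f p.2) + 2 * ∑ i ∈ s, f i = 2 * (s.card * ∑ i ∈ s, f i) := by
  classical
  have hdiag : ∑ p ∈ s.diag, (f p.1 + f p.2) = 2 * ∑ i ∈ s, f i := by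
    simp only [Finset.sum_diag, ← two_mul, Finset.mul_sum]
  rw [← hdiag, add_comm, ← Finset.sum_union (Finset.disjoint_diag_offDiag s),
    Finset.diag_union_offDiag, Finset.sum_product]
  simp only [Finset.sum_add_distrib, Finset.sum_const, smul_eq_mul, ← Finset.mul_sum, two_mul]

section Kempe

variable {V : Type*} {G : SimpleGraph V} {c : Finset (Finset V)}

theorem card_add_card_le_card_interedges_add_one [DecidableEq V] [DecidableRel G.Adj]
    {A B : Finset V} (hA : IsAnticlique G A) (hB : IsAnticlique G B) (hAB : Disjoint A B)
    (hconn : ConnSet G (A ∪ B)) : A.card + B.card ≤ (G.interedges A B).card + 1 := by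
  set H := G.induce ((A ∪ B : Finset V) : Set V)
  have hsubset : Sym2.map Subtype.val '' H.edgeSet ⊆
      (fun p : V × V ↦ s(p.1, p.2)) '' G.interedges A B := by
    rintro _ ⟨⟨⟨a, ha⟩, ⟨b, hb⟩⟩, hab : G.Adj a b, rfl⟩
    rcases Finset.mem_union.1 ha with ha | ha <;> rcases Finset.mem_union.1 hb with hb | hb
    · exact absurd hab (hA a ha b hb)
    · exact ⟨(a, b), G.mem_interedges_iff.2 ⟨ha, hb, hab⟩, rfl⟩
    · exact ⟨(b, a), G.mem_interedges_iff.2 ⟨hb, ha, hab.symm⟩, Sym2.eq_swap⟩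
    · exact absurd hab (hB a ha b hb)
  have hedges : H.edgeSet.ncard ≤ (G.interedges A B).card := calc
    H.edgeSet.ncard = (Sym2.map Subtype.val '' H.edgeSet).ncard :=
      (Set.ncard_image_of_injective _ (Sym2.map.injective Subtype.val_injective)).symm
    _ ≤ _ := Set.ncard_le_ncard hsubset
    _ ≤ _ := Set.ncard_image_le
    _ = _ := Set.ncard_coe_finset _
  calc A.card + B.card = Nat.card ((A ∪ B : Finset V) : Set V) := by
        rw [Nat.card_coe_set_eq, Set.ncard_coe_finset, Finset.card_union_of_disjoint hAB]
    _ ≤ H.edgeSet.ncard + 1 := Connected.card_vert_le_card_edgeSet_add_one hconn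
    _ ≤ (G.interedges A B).card + 1 := by gcongr

/-- The classes of a coloring, as a partition of the vertex set. -/
def IsColoring.finpartition [Fintype V] [DecidableEq V] (hc : IsColoring G c) :
    Finpartition (Finset.univ : Finset V) where
  parts := c
  supIndep := Finset.supIndep_iff_pairwiseDisjoint.2 fun A hA B hB ↦ hc.2.1 A hA B hB
  sup_parts := by
    ext v
    simpa [Finset.mem_sup] using hc.2.2.1 v
  bot_notMem h := Finset.not_nonempty_empty (hc.1 _ h)

variable [Finite V]

theorem IsColoring.card_le_natCard (hc : IsColoring G c) : c.card ≤ Nat.card V := by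
  classical
  have := Fintype.ofFinite V
  rw [Nat.card_eq_fintype_card]
  exact hc.finpartition.card_parts_le_card

theorem IsColoring.sum_card_eq_natCard (hc : IsColoring G c) :
    ∑ A ∈ c, A.card = Nat.card V := by
  classical
  have := Fintype.ofFinite V
  rw [Nat.card_eq_fintype_card]
  exact hc.finpartition.sum_card_parts

theorem IsColoring.sum_card_interedges_le [DecidableRel G.Adj] (hc : IsColoring G c) :
    ∑ p ∈ c.offDiag, (G.interedges p.1 p.2).card ≤ 2 * G.edgeSet.ncard := by
  classical
  have := Fintype.ofFinite V
  calc ∑ p ∈ c.offDiag, (G.interedges p.1 p.2).card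
      ≤ ∑ p ∈ c ×ˢ c, (G.interedges p.1 p.2).card :=
        Finset.sum_le_sum_of_subset (Finset.diag_union_offDiag c ▸ Finset.subset_union_right)
    _ = (G.interedges Finset.univ Finset.univ).card :=
      (Rel.card_interedges_finpartition G.Adj hc.finpartition hc.finpartition).symm
    _ = 2 * G.edgeSet.ncard := by
      rw [← coe_edgeFinset, Set.ncard_coe_finset, two_mul_card_edgeFinset]
      rfl

theorem IsKempe.card_mul_natCard_le [DecidableEq V] (hc : IsKempe G c) :
    c.card * Nat.card V ≤ G.edgeSet.ncard + c.card.choose 2 + Nat.card V := by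
  classical
  have hpairs : ∑ p ∈ c.offDiag, (p.1.card + p.2.card) ≤ 2 * G.edgeSet.ncard + c.offDiag.card :=
    calc ∑ p ∈ c.offDiag, (p.1.card + p.2.card)
        ≤ ∑ p ∈ c.offDiag, ((G.interedges p.1 p.2).card + 1) := by
          refine Finset.sum_le_sum fun ⟨A, B⟩ hp ↦ ?_
          obtain ⟨hA, hB, hne⟩ := Finset.mem_offDiag.1 hp
          exact card_add_card_le_card_interedges_add_one (hc.1.2.2.2 A hA) (hc.1.2.2.2 B hB)
            (hc.1.2.1 A hA B hB hne) (hc.2 A hA B hB hne)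
      _ = ∑ p ∈ c.offDiag, (G.interedges p.1 p.2).card + c.offDiag.card := by
          rw [Finset.sum_add_distrib, Finset.card_eq_sum_ones]
      _ ≤ 2 * G.edgeSet.ncard + c.offDiag.card := by gcongr; exact hc.1.sum_card_interedges_le
  have hoffDiag : c.offDiag.card = 2 * c.card.choose 2 := by
    rw [Finset.offDiag_card, two_mul_choose_two, Nat.mul_sub_one]
  have hsum := sum_offDiag_add_two_mul_sum c Finset.card
  rw [hc.1.sum_card_eq_natCard] at hsum
  lia

theorem IsKempe.choose_two_add_le_ncard_edgeSet [DecidableEq V] (hc : IsKempe G c) {r : ℕ}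
    (hr : Nat.card V = c.card + r) :
    c.card.choose 2 + (c.card - 1) * r ≤ G.edgeSet.ncard := by
  have hedges := hc.card_mul_natCard_le
  rw [hr] at hedges
  have hchoose := two_mul_choose_two c.card
  generalize c.card = k at hedges hchoose ⊢
  cases k with
  | zero => simp
  | succ j =>
    rw [Nat.add_sub_cancel] at hchoose ⊢
    lia

end Kempe

/-- a Kempe-coloring of size `k ≤ 6` forces a clique minor of size `k`. -/
theorem kempe_le_six_clique_minor {V : Type*} [Fintype V] [DecidableEq V]
    (G : SimpleGraph V) (c : Finset (Finset V)) (k : ℕ)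
    (hk : IsKempe G c) (hcard : c.card = k) (hk6 : k ≤ 6) :
    ∃ K : Finset (Finset V), IsCliqueMinor G K ∧ K.card = k := by
  subst hcard
  obtain ⟨r, hr⟩ := Nat.exists_eq_add_of_le hk.1.card_le_natCard
  exact forcesCliqueMinor_of_le_six hk6 r V G hr (hk.choose_two_add_le_ncard_edgeSet hr)
end

section
/- If M is the only perfect matching of a nonempty graph G, then M contains a bridge of G. -/
open SimpleGraph

/-!
Let `m` send each vertex to its partner in `M`. An `M`-alternating cycle could be switched to
produce another perfect matching, so there is none. Let `R c` be the set of vertices `y` such that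
some alternating path begins with the matching edge `c, m c` and traverses a matching edge from `y`
to `m y`. Suppose `y ∈ R c` with `y ≠ c` and `m y ∉ R c`. An alternating path starting with `y, m y`
never returns to a path leading from `c` to `y`: it would close an alternating cycle, or walking it
backwards would show `m y ∈ R c`. Hence `R y ⊂ R c`.

So if `R c` is minimal, then `m` maps `R c \ {c}` into `R c`. By the absence of alternating cycles,
the vertices `v ≠ c` with `m v ∈ R c` then form a set that only the edge `c, m c` leaves.
-/

namespace Kotzig

variable {V : Type*} {G : SimpleGraph V} {m : V → V}

section Matchings

/-- A perfect matching of `G`, encoded by the map sending each vertex to its partner. -/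
structure IsMatchingInvolution (G : SimpleGraph V) (m : V → V) : Prop where
  involutive : m.Involutive
  adj : ∀ v, G.Adj v (m v)

/-- The subgraph of `G` whose edges are the pairs `v, m v`. -/
def IsMatchingInvolution.toSubgraph (hm : IsMatchingInvolution G m) : G.Subgraph where
  verts := Set.univ
  Adj v w := m v = w
  adj_sub := by
    rintro v _ rfl
    exact hm.adj v
  edge_vert _ := Set.mem_univ _
  symm := ⟨fun _ _ h ↦ hm.involutive.eq_iff.1 h |>.symm⟩

theorem IsMatchingInvolution.toSubgraph_adj (hm : IsMatchingInvolution G m) {v w : V} :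
    hm.toSubgraph.Adj v w ↔ m v = w :=
  Iff.rfl

theorem IsMatchingInvolution.isPerfectMatching_toSubgraph (hm : IsMatchingInvolution G m) :
    hm.toSubgraph.IsPerfectMatching :=
  Subgraph.isPerfectMatching_iff.2 fun v ↦ ⟨m v, rfl, fun _ h ↦ (hm.toSubgraph_adj.1 h).symm⟩

theorem IsMatchingInvolution.eq_of_toSubgraph_eq {m' : V → V} (hm : IsMatchingInvolution G m)
    (hm' : IsMatchingInvolution G m') (h : hm'.toSubgraph = hm.toSubgraph) : m' = m := by
  funext v
  have hadj : hm'.toSubgraph.Adj v (m' v) := hm'.toSubgraph_adj.2 rfl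
  rw [h] at hadj
  exact (hm.toSubgraph_adj.1 hadj).symm

theorem exists_toSubgraph_eq {M : G.Subgraph} (hM : M.IsPerfectMatching) :
    ∃ (m : V → V) (hm : IsMatchingInvolution G m), hm.toSubgraph = M := by
  choose m hadj huniq using Subgraph.isPerfectMatching_iff.1 hM
  refine ⟨m, ⟨fun v ↦ (huniq _ _ (hadj v).symm).symm, fun v ↦ (hadj v).adj_sub⟩, ?_⟩
  refine Subgraph.ext (Set.eq_univ_of_forall hM.2).symm ?_
  ext v w
  rw [IsMatchingInvolution.toSubgraph_adj]
  exact ⟨fun h ↦ h ▸ hadj v, fun h ↦ (huniq v w h).symm⟩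

end Matchings

section AlternatingPaths

/-- An alternating path, encoded as the list of the tails `a` of its matching steps `a, m a`:
the path `a₁, m a₁, a₂, m a₂, …` is the list `[a₁, a₂, …]`. -/
structure IsAltPath (G : SimpleGraph V) (m : V → V) (l : List V) : Prop where
  isChain : l.IsChain fun a b ↦ G.Adj (m a) b
  pairwise : l.Pairwise fun a b ↦ a ≠ b ∧ m a ≠ b

/-- There are no alternating cycles: no alternating path with at least two matching edges closes
up. (A single matching edge `a, m a` trivially closes up.) -/
def IsAltAcyclic (G : SimpleGraph V) (m : V → V) : Prop :=
  ∀ l : List V, IsAltPath G m l → 2 ≤ l.length →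
    ¬ (l : Cycle V).Chain fun a b ↦ G.Adj (m a) b

/-- The vertices `y` such that an alternating path starting with `c, m c` passes through the
matching edge `y, m y` in the direction from `y` to `m y`. -/
def altReachable (G : SimpleGraph V) (m : V → V) (c : V) : Set V :=
  {y | ∃ l, IsAltPath G m l ∧ l.head? = some c ∧ y ∈ l}

theorem IsAltPath.nodup {l : List V} (hl : IsAltPath G m l) : l.Nodup :=
  hl.pairwise.imp And.left

theorem IsAltPath.infix {l l' : List V} (hl : IsAltPath G m l) (h : l' <:+: l) :
    IsAltPath G m l' :=
  ⟨hl.isChain.infix h, hl.pairwise.sublist h.sublist⟩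

theorem IsAltPath.append_overlap {l₁ l₂ l₃ : List V} (h₁₂ : IsAltPath G m (l₁ ++ l₂))
    (h₂₃ : IsAltPath G m (l₂ ++ l₃)) (hne : l₂ ≠ [])
    (hdisj : ∀ a ∈ l₁, ∀ b ∈ l₃, a ≠ b ∧ m a ≠ b) : IsAltPath G m (l₁ ++ l₂ ++ l₃) := by
  refine ⟨h₁₂.isChain.append_overlap h₂₃.isChain hne,
    List.pairwise_append.2 ⟨h₁₂.pairwise, (List.pairwise_append.1 h₂₃.pairwise).2.1, ?_⟩⟩
  intro a ha b hb
  rcases List.mem_append.1 ha with ha | ha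
  · exact hdisj a ha b hb
  · exact (List.pairwise_append.1 h₂₃.pairwise).2.2 a ha b hb

theorem IsAltPath.reverse_map {l : List V} (hl : IsAltPath G m l) (hm : m.Involutive) :
    IsAltPath G m (l.map m).reverse := by
  constructor
  · rw [List.isChain_reverse, List.isChain_map]
    exact hl.isChain.imp fun a b hab ↦ by rw [hm b]; exact hab.symm
  · rw [List.pairwise_reverse, List.pairwise_map]
    exact hl.pairwise.imp fun {a b} hab ↦
      ⟨hm.injective.ne hab.1.symm, by rw [hm b]; exact hab.2.symm⟩

theorem IsAltPath.apply_notMem {l : List V} {a : V} (hl : IsAltPath G m l)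
    (hm : IsMatchingInvolution G m) (ha : a ∈ l) : m a ∉ l := by
  obtain ⟨s, t, rfl⟩ := List.append_of_mem ha
  have hst := hl.pairwise
  simp only [List.pairwise_append, List.pairwise_cons] at hst
  intro hma
  rcases List.mem_append.1 hma with hs | ht
  · exact (hst.2.2 _ hs a List.mem_cons_self).2 (hm.involutive a)
  rcases List.mem_cons.1 ht with heq | ht
  · exact (hm.adj a).ne' heq
  · exact (hst.2.1.1 _ ht).2 rfl

theorem mem_altReachable_self (G : SimpleGraph V) (m : V → V) (c : V) :
    c ∈ altReachable G m c :=
  ⟨[c], ⟨by simp, by simp⟩, rfl, by simp⟩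

theorem exists_isAltPath_concat {c y : V} (hy : y ∈ altReachable G m c) :
    ∃ l, IsAltPath G m (l ++ [y]) ∧ (l ++ [y]).head? = some c := by
  obtain ⟨l, hl, hc, hyl⟩ := hy
  obtain ⟨s, t, rfl⟩ := List.append_of_mem hyl
  exact ⟨s, hl.infix ⟨[], t, by simp⟩, by simpa [List.head?_append] using hc⟩

theorem mem_or_apply_mem_altReachable_of_adj (hm : m.Involutive) {c y w : V}
    (hy : y ∈ altReachable G m c) (hyw : G.Adj (m y) w) :
    w ∈ altReachable G m c ∨ m w ∈ altReachable G m c := by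
  obtain ⟨l, hl, hc⟩ := exists_isAltPath_concat hy
  by_cases hw : w ∈ l ++ [y]
  · exact .inl ⟨_, hl, hc, hw⟩
  by_cases hmw : m w ∈ l ++ [y]
  · exact .inr ⟨_, hl, hc, hmw⟩
  have hdisj : ∀ a ∈ l ++ [y], a ≠ w ∧ m a ≠ w := fun a ha ↦
    ⟨fun h ↦ hw (h ▸ ha), fun h ↦ hmw (hm.eq_iff.1 h ▸ ha)⟩
  have hlw : IsAltPath G m (l ++ [y] ++ [w]) :=
    hl.append_overlap ⟨by simpa using hyw, by simpa using hdisj y (by simp)⟩ (by simp)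
      (by simpa using fun a ha ↦ hdisj a (by simp [ha]))
  exact .inl ⟨_, hlw, by rw [List.head?_append, hc, Option.some_or], by simp⟩

theorem IsAltAcyclic.not_adj_of_mem_altReachable (hG : IsAltAcyclic G m) {c y : V}
    (hy : y ∈ altReachable G m c) (hyc : y ≠ c) : ¬ G.Adj (m y) c := by
  intro hadj
  obtain ⟨_ | ⟨a, l⟩, hl, hc⟩ := exists_isAltPath_concat hy
  · exact hyc (by simpa using hc)
  obtain rfl : a = c := by simpa using hc
  refine hG _ hl (by simp) (Cycle.chain_coe_cons _ _ _ |>.2 ?_)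
  exact hl.isChain.append_overlap (l₃ := [a]) (by simpa using hadj) (by simp)

end AlternatingPaths

section Bridges

theorem IsAltPath.append_of_apply_notMem_altReachable (hm : m.Involutive)
    (hG : IsAltAcyclic G m) {c y : V} {l r : List V} (hl : IsAltPath G m (l ++ [y]))
    (hc : (l ++ [y]).head? = some c) (hy : m y ∉ altReachable G m c)
    (hr : IsAltPath G m (y :: r)) : IsAltPath G m (l ++ y :: r) := by
  induction r using List.reverseRecOn with
  | nil => exact hl
  | append_singleton r z ih =>
    have hlr : IsAltPath G m (l ++ y :: r) := ih (hr.infix ⟨[], [z], by simp⟩)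
    suffices hdisj : ∀ a ∈ l, ∀ b ∈ [z], a ≠ b ∧ m a ≠ b by
      simpa using hlr.append_overlap hr (by simp) hdisj
    intro a ha b hb
    obtain rfl := List.mem_singleton.1 hb
    obtain ⟨s, t, rfl⟩ := List.append_of_mem ha
    constructor
    · rintro rfl
      have hcycle : IsAltPath G m (a :: t ++ y :: r) := hlr.infix ⟨s, [], by simp⟩
      refine hG _ hcycle (by simp only [List.length_append, List.length_cons]; omega)
        (Cycle.chain_coe_cons _ _ _ |>.2 ?_)
      simpa using hcycle.isChain.append_overlap hr.isChain (by simp)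
    · rintro rfl
      have hback : IsAltPath G m ([a] ++ ((y :: r).map m).reverse) := by
        simpa [hm a] using hr.reverse_map hm
      have hdisj : ∀ d ∈ s, ∀ e ∈ ((y :: r).map m).reverse, d ≠ e ∧ m d ≠ e := by
        simp only [List.mem_reverse, List.mem_map]
        rintro d hd _ ⟨e, he, rfl⟩
        have hde := (List.pairwise_append.1 hlr.pairwise).2.2 d (by simp [hd]) e he
        exact ⟨fun h ↦ hde.2 (hm.eq_iff.2 h), hm.injective.ne hde.1⟩
      have hsa : IsAltPath G m (s ++ [a]) := hlr.infix ⟨[], t ++ y :: r, by simp⟩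
      refine hy ⟨_, hsa.append_overlap hback (by simp) hdisj, ?_, by simp⟩
      simpa [List.head?_append] using hc

theorem altReachable_ssubset (hm : m.Involutive) (hG : IsAltAcyclic G m) {c y : V}
    (hyc : y ∈ altReachable G m c) (hne : y ≠ c) (hmy : m y ∉ altReachable G m c) :
    altReachable G m y ⊂ altReachable G m c := by
  obtain ⟨l, hl, hc⟩ := exists_isAltPath_concat hyc
  have hcl : c ∈ l := by
    have hmem := List.mem_of_head? hc
    simpa [hne.symm] using hmem
  have happend : ∀ r, IsAltPath G m (y :: r) → IsAltPath G m (l ++ y :: r) := fun _ ↦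
    hl.append_of_apply_notMem_altReachable hm hG hc hmy
  refine (Set.ssubset_iff_of_subset ?_).2 ⟨c, mem_altReachable_self G m c, ?_⟩
  · rintro x ⟨r, hr, hry, hx⟩
    obtain ⟨r, rfl⟩ := List.head?_eq_some_iff.1 hry
    exact ⟨_, happend r hr, by simpa [List.head?_append] using hc, List.mem_append_right _ hx⟩
  · rintro ⟨r, hr, hry, hcr⟩
    obtain ⟨r, rfl⟩ := List.head?_eq_some_iff.1 hry
    exact List.disjoint_of_nodup_append (happend r hr).nodup hcl hcr

theorem IsMatchingInvolution.isBridge_of_altReachable_closed (hm : IsMatchingInvolution G m)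
    (hG : IsAltAcyclic G m) {c : V}
    (hclosed : ∀ y ∈ altReachable G m c, y ≠ c → m y ∈ altReachable G m c) :
    G.IsBridge s(m c, c) := by
  rw [isBridge_iff]
  rintro ⟨p⟩
  have hmc : m (m c) ∈ altReachable G m c := by
    rw [hm.involutive c]
    exact mem_altReachable_self G m c
  obtain ⟨⟨⟨v, w⟩, hvw⟩, -, ⟨-, hmv⟩, hw⟩ :=
    p.exists_boundary_dart {v | v ≠ c ∧ m v ∈ altReachable G m c} ⟨(hm.adj c).ne', hmc⟩ (by simp)
  obtain ⟨hadj, hnot⟩ : G.Adj v w ∧ s(v, w) ≠ s(m c, c) := by simpa using hvw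
  rw [← hm.involutive v] at hadj
  obtain rfl : w = c := by
    by_contra hwc
    refine hw ⟨hwc, ?_⟩
    rcases mem_or_apply_mem_altReachable_of_adj hm.involutive hmv hadj with h | h
    · exact hclosed w h hwc
    · exact h
  refine hG.not_adj_of_mem_altReachable hmv (fun h ↦ hnot ?_) hadj
  obtain rfl : v = m w := hm.involutive.eq_iff.1 h
  rfl

theorem IsMatchingInvolution.exists_isBridge [Finite V] [Nonempty V]
    (hm : IsMatchingInvolution G m) (hG : IsAltAcyclic G m) : ∃ c, G.IsBridge s(m c, c) := by
  obtain ⟨c, -, hmin⟩ :=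
    exists_minimalFor_of_wellFoundedLT (fun _ : V ↦ True) (altReachable G m) (by simp)
  refine ⟨c, hm.isBridge_of_altReachable_closed hG fun y hy hne ↦ ?_⟩
  by_contra hmy
  have hlt := altReachable_ssubset hm.involutive hG hy hne hmy
  exact hlt.2 (hmin trivial hlt.1)

end Bridges

section Switching

theorem rel_formPerm_of_chain {α : Type*} [DecidableEq α] {r : α → α → Prop} {l : List α}
    (hl : l.Nodup) (hr : (l : Cycle α).Chain r) {x : α} (hx : x ∈ l) : r x (l.formPerm x) := by
  obtain ⟨s, t, rfl⟩ := List.append_of_mem hx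
  have hrot : (s ++ x :: t) ~r (x :: (t ++ s)) := List.isRotated_append
  rw [List.formPerm_eq_of_isRotated hl hrot]
  rw [Cycle.coe_eq_coe.2 hrot, Cycle.chain_coe_cons] at hr
  rw [hrot.nodup_iff] at hl
  cases hq : t ++ s with
  | nil => simpa [hq] using hr
  | cons y q =>
    rw [hq] at hl hr
    rw [List.formPerm_apply_head x y q hl]
    exact hr.rel

/-- Rotating the tails along the alternating cycle `l` switches the matching edges on it. -/
theorem IsMatchingInvolution.conj_formPerm [DecidableEq V] (hm : IsMatchingInvolution G m)
    {l : List V} (hl : IsAltPath G m l)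
    (hcycle : (l : Cycle V).Chain fun a b ↦ G.Adj (m a) b) :
    IsMatchingInvolution G (l.formPerm ∘ m ∘ l.formPerm.symm) := by
  have hrot : ∀ v ∈ l, G.Adj (m v) (l.formPerm v) := fun v hv ↦
    rel_formPerm_of_chain hl.nodup hcycle hv
  have hfix : ∀ v ∉ l, l.formPerm v = v := fun v hv ↦ List.formPerm_apply_of_notMem hv
  refine ⟨fun v ↦ by simp [hm.involutive _], fun v ↦ ?_⟩
  obtain ⟨w, rfl⟩ := l.formPerm.surjective v
  simp only [Function.comp_apply, Equiv.symm_apply_apply]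
  by_cases hw : w ∈ l
  · rw [hfix (m w) (hl.apply_notMem hm hw)]
    exact (hrot w hw).symm
  rw [hfix w hw]
  by_cases hmw : m w ∈ l
  · simpa only [hm.involutive w] using hrot (m w) hmw
  · rw [hfix (m w) hmw]
    exact hm.adj w

theorem IsMatchingInvolution.isAltAcyclic_of_unique (hm : IsMatchingInvolution G m)
    (huniq : ∀ m', IsMatchingInvolution G m' → m' = m) : IsAltAcyclic G m := by
  classical
  intro l hl hlen hcycle
  obtain ⟨v, hv⟩ := List.exists_mem_of_length_pos (show 0 < l.length by omega)
  have hcomm : l.formPerm (m v) = m (l.formPerm v) := by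
    simpa using congrFun (huniq _ (hm.conj_formPerm hl hcycle)) (l.formPerm v)
  rw [List.formPerm_apply_of_notMem (hl.apply_notMem hm hv)] at hcomm
  have hfixed : l.formPerm v = v := (hm.involutive.injective hcomm).symm
  have hlen_le := (List.formPerm_apply_mem_eq_self_iff l hl.nodup v hv).1 hfixed
  omega

end Switching

end Kotzig

/-- Kotzig's theorem: the unique perfect matching of a nonempty graph contains a bridge. -/
theorem unique_perfect_matching_contains_bridge {V : Type*} [Fintype V] [Nonempty V]
    (G : SimpleGraph V) (M : SimpleGraph.Subgraph G)
    (hM : M.IsPerfectMatching)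
    (huniq : ∀ M' : SimpleGraph.Subgraph G, M'.IsPerfectMatching → M' = M) :
    ∃ e ∈ M.edgeSet, G.IsBridge e := by
  obtain ⟨m, hm, rfl⟩ := Kotzig.exists_toSubgraph_eq hM
  have hacyclic : Kotzig.IsAltAcyclic G m := hm.isAltAcyclic_of_unique fun m' hm' ↦
    hm.eq_of_toSubgraph_eq hm' (huniq _ hm'.isPerfectMatching_toSubgraph)
  obtain ⟨c, hc⟩ := hm.exists_isBridge hacyclic
  exact ⟨s(m c, c), hm.toSubgraph_adj.2 (hm.involutive c), hc⟩
end
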